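/- Let i ∈ {1, n}, let 𝓕_i be an EKR-set of totally isotropic i-spaces of maximum cardinality among all EKR-sets of i-spaces, and let J ⊆ [n] be nonempty with i ∉ J. Then 𝓕_i contains two i-spaces I₁ and I₂ that can be extended to flags F₁ and F₂ of type {i} ∪ J (so the i-space of F_k is I_k for k = 1, 2) such that the subflags of F₁ and F₂ of type J are opposite. -/

import Mathlib

open scoped Classical

open Module

section Defs

variable {F V : Type} [Field F] [AddCommGroup V] [Module F V]

/-- The orthogonal complement of a subspace with respect to a bilinear form. -/
def bperp (B : V →ₗ[F] V →ₗ[F] F) (W : Submodule F V) : Submodule F V :=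
  ⨅ w ∈ W, LinearMap.ker (B w)

/-- A subspace is totally isotropic for `B`. -/
def IsTotIso (B : V →ₗ[F] V →ₗ[F] F) (W : Submodule F V) : Prop :=
  ∀ u ∈ W, ∀ w ∈ W, B u w = 0

/-- `B` is an alternating form. -/
def IsAltForm (B : V →ₗ[F] V →ₗ[F] F) : Prop := ∀ v, B v v = 0

/-- `B` is nondegenerate. -/
def NondegForm (B : V →ₗ[F] V →ₗ[F] F) : Prop := ∀ v, (∀ w, B v w = 0) → v = 0

/-- A flag of type `J` of totally isotropic subspaces: entries outside `J` are `⊥`. -/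
structure SFlag (B : V →ₗ[F] V →ₗ[F] F) (J : Finset ℕ) where
  space : ℕ → Submodule F V
  isotropic : ∀ i ∈ J, IsTotIso B (space i)
  finrank_eq : ∀ i ∈ J, Module.finrank F (space i) = i
  mono : ∀ i ∈ J, ∀ j ∈ J, i ≤ j → space i ≤ space j
  eq_bot : ∀ i, i ∉ J → space i = ⊥

/-- Two flags of type `J` are opposite. -/
def FlagOpp {B : V →ₗ[F] V →ₗ[F] F} {J : Finset ℕ} (C C' : SFlag B J) : Prop :=
  ∀ i ∈ J, bperp B (C.space i) ⊓ C'.space i = ⊥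

/-- An EKR-set of flags of type `J`: no two members are opposite. -/
def IsEKRFlags {B : V →ₗ[F] V →ₗ[F] F} {J : Finset ℕ} (𝓕 : Set (SFlag B J)) : Prop :=
  ∀ C ∈ 𝓕, ∀ C' ∈ 𝓕, ¬ FlagOpp C C'

/-- Two subspaces are opposite. -/
def SpaceOpp (B : V →ₗ[F] V →ₗ[F] F) (S T : Submodule F V) : Prop :=
  bperp B S ⊓ T = ⊥

/-- An EKR-set of totally isotropic `s`-spaces: no two members are opposite. -/
def IsEKRSpaces (B : V →ₗ[F] V →ₗ[F] F) (s : ℕ) (𝓕 : Set (Submodule F V)) : Prop :=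
  (∀ S ∈ 𝓕, IsTotIso B S ∧ Module.finrank F S = s) ∧
    ∀ S ∈ 𝓕, ∀ T ∈ 𝓕, ¬ SpaceOpp B S T

/-- An `s`-space `S` is heavy with respect to a set `𝓕` of flags: every flag whose
`s`-th entry equals `S` belongs to `𝓕`. -/
def Heavy {B : V →ₗ[F] V →ₗ[F] F} {J : Finset ℕ} (𝓕 : Set (SFlag B J)) (s : ℕ)
    (S : Submodule F V) : Prop :=
  ∀ C : SFlag B J, C.space s = S → C ∈ 𝓕

end Defs

/-- `z_k = ∏_{i=1}^k (q^i-1)/(q-1)`. -/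
noncomputable def zpol (q k : ℕ) : ℝ :=
  ∏ i ∈ Finset.Icc 1 k, ((q : ℝ) ^ i - 1) / ((q : ℝ) - 1)

/-- The Gaussian binomial coefficient `[m choose k]_q` as a real number. -/
noncomputable def gaussq (q m k : ℕ) : ℝ :=
  ∏ i ∈ Finset.Icc 1 k, ((q : ℝ) ^ (m - k + i) - 1) / ((q : ℝ) ^ i - 1)

/-- `Φ_m^s` in `PS(n,1,q)`: the number of totally isotropic `s`-spaces containing a
fixed totally isotropic `m`-space. -/
noncomputable def PhiP (q n m s : ℕ) : ℝ :=
  gaussq q (n - m) (s - m) * ∏ i ∈ Finset.Icc 1 (s - m), ((q : ℝ) ^ (n - m + 1 - i) + 1)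

/-!
In the polar space of a nondegenerate alternating form, removing a pair `x ∈ S`, `y ∈ T` with
`B x y ≠ 0` from opposite totally isotropic spaces `S`, `T`, or adjoining such a pair from
`(S + T)^⊥`, again gives opposite spaces. Hence opposite totally isotropic spaces are always members
of two opposite full flags, and it suffices to place the two spaces of the EKR-set next to a single
opposite pair.

For `i = 1`, two distinct non-opposite points lie in opposite totally isotropic lines. For
`i = n`, two maximal totally isotropic spaces `S`, `T` that meet in a point `⟨p⟩` contain
the opposite `(n - 1)`-spaces `S ∩ v^⊥` and `T ∩ v^⊥`, for any `v` not orthogonal to `p`. A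
maximal EKR-set `𝓕` has two such members: if all its members met in dimension at least two, then
projecting `T ∈ 𝓕` from a vector `v` not orthogonal to `S ∩ T` would give a space still meeting
every member of `𝓕`, hence in `𝓕` by maximality, that meets `S` in a smaller space than `T` does;
this descent cannot continue forever.
-/

section Bilinear

variable {K V : Type*} [Field K] [AddCommGroup V] [Module K V]

lemma inf_ker_sup_span_singleton {W : Submodule K V} {f : Dual K V} {x : V} (hx : x ∈ W)
    (hfx : f x ≠ 0) : W ⊓ LinearMap.ker f ⊔ K ∙ x = W := by
  have hspan : K ∙ x ≤ W := (Submodule.span_singleton_le_iff_mem _ _).2 hx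
  rw [sup_comm, inf_comm, ← sup_inf_assoc_of_le _ hspan, f.span_singleton_sup_ker_eq_top hfx,
    top_inf_eq]

lemma finrank_inf_ker_add_one [FiniteDimensional K V] {W : Submodule K V} {f : Dual K V} {x : V}
    (hx : x ∈ W) (hfx : f x ≠ 0) :
    finrank K (W ⊓ LinearMap.ker f : Submodule K V) + 1 = finrank K W := by
  have hx' : x ∉ W ⊓ LinearMap.ker f := fun h ↦ hfx h.2
  rw [← Submodule.finrank_sup_span_singleton hx', inf_ker_sup_span_singleton hx hfx]

lemma finrank_le_finrank_inf_ker_add_one [FiniteDimensional K V] (W : Submodule K V)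
    (f : Dual K V) : finrank K W ≤ finrank K (W ⊓ LinearMap.ker f : Submodule K V) + 1 := by
  by_cases hW : W ≤ LinearMap.ker f
  · rw [inf_of_le_left hW]
    exact Nat.le_succ _
  · obtain ⟨x, hx, hfx⟩ := SetLike.not_le_iff_exists.1 hW
    exact (finrank_inf_ker_add_one hx hfx).ge

lemma exists_eq_span_singleton_of_finrank_eq_one {W : Submodule K V} (hW : finrank K W = 1) :
    ∃ v, v ≠ 0 ∧ W = K ∙ v :=
  (atom_iff_nonzero_span W).1 (Submodule.isAtom_iff_finrank_eq_one.2 hW)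

variable {B : LinearMap.BilinForm K V} {S T W : Submodule K V} {v : V}

lemma orthogonal_sup (B : LinearMap.BilinForm K V) (S T : Submodule K V) :
    B.orthogonal (S ⊔ T) = B.orthogonal S ⊓ B.orthogonal T := by
  refine le_antisymm (le_inf (LinearMap.BilinForm.orthogonal_le le_sup_left)
    (LinearMap.BilinForm.orthogonal_le le_sup_right)) fun x hx w hw ↦ ?_
  obtain ⟨s, hs, t, ht, rfl⟩ := Submodule.mem_sup.1 hw
  rw [map_add, LinearMap.add_apply, hx.1 s hs, hx.2 t ht, add_zero]

lemma mem_orthogonal_span_singleton {x : V} : x ∈ B.orthogonal (K ∙ v) ↔ B v x = 0 := by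
  rw [LinearMap.BilinForm.orthogonal_span_singleton_eq_toLin_ker]
  rfl

lemma le_orthogonal_comm (hB : B.IsRefl) : S ≤ B.orthogonal T ↔ T ≤ B.orthogonal S :=
  ⟨fun h _ ht _ hs ↦ hB _ _ (h hs _ ht), fun h _ hs _ ht ↦ hB _ _ (h ht _ hs)⟩

lemma le_orthogonal_self_of_le (hTW : T ≤ W) (hW : W ≤ B.orthogonal W) : T ≤ B.orthogonal T :=
  hTW.trans (hW.trans (LinearMap.BilinForm.orthogonal_le hTW))

lemma span_singleton_le_orthogonal_self (hB : B.IsAlt) (v : V) :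
    K ∙ v ≤ B.orthogonal (K ∙ v) :=
  (Submodule.span_singleton_le_iff_mem _ _).2 (mem_orthogonal_span_singleton.2 (hB v))

lemma sup_span_le_orthogonal_self (hB : B.IsAlt) (hW : W ≤ B.orthogonal W)
    (hv : v ∈ B.orthogonal W) : W ⊔ K ∙ v ≤ B.orthogonal (W ⊔ K ∙ v) := by
  have hvW : K ∙ v ≤ B.orthogonal W := (Submodule.span_singleton_le_iff_mem _ _).2 hv
  rw [orthogonal_sup]
  exact le_inf (sup_le hW hvW)
    (sup_le ((le_orthogonal_comm hB.isRefl).2 hvW) (span_singleton_le_orthogonal_self hB v))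

lemma disjoint_orthogonal_symm [FiniteDimensional K V] (hB : B.Nondegenerate) (hrefl : B.IsRefl)
    (hST : finrank K S = finrank K T) (h : Disjoint (B.orthogonal S) T) :
    Disjoint (B.orthogonal T) S := by
  have hsup : B.orthogonal S ⊔ T = ⊤ := by
    refine Submodule.eq_top_of_disjoint _ _ ?_ h
    rw [LinearMap.BilinForm.finrank_orthogonal hB]
    lia
  rw [disjoint_iff]
  calc B.orthogonal T ⊓ S = B.orthogonal T ⊓ B.orthogonal (B.orthogonal S) := by
        rw [LinearMap.BilinForm.orthogonal_orthogonal hB hrefl]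
    _ = B.orthogonal (B.orthogonal S ⊔ T) := by rw [orthogonal_sup, inf_comm]
    _ = ⊥ := by rw [hsup, LinearMap.BilinForm.orthogonal_top_eq_bot hB]

lemma exists_mem_orthogonal_apply_ne_zero [FiniteDimensional K V] (hB : B.Nondegenerate)
    (hrefl : B.IsRefl) (hW : Disjoint W (B.orthogonal W)) {r : V} (hr : r ∈ B.orthogonal W)
    (hr0 : r ≠ 0) : ∃ y ∈ B.orthogonal W, B y r ≠ 0 := by
  have hnd : (B.restrict (B.orthogonal W)).Nondegenerate := by
    apply B.nondegenerate_restrict_of_disjoint_orthogonal hrefl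
    rw [LinearMap.BilinForm.orthogonal_orthogonal hB hrefl]
    exact hW.symm
  by_contra! h
  exact hr0 (congrArg Subtype.val (hnd.2 ⟨r, hr⟩ fun y ↦ h y y.2))

lemma exists_apply_eq_zero_and_apply_ne_zero [FiniteDimensional K V] (hB : B.Nondegenerate)
    (hrefl : B.IsRefl) {p r : V} (hpr : p ∉ K ∙ r) : ∃ x, B r x = 0 ∧ B p x ≠ 0 := by
  by_contra! h
  have hle : B.orthogonal (K ∙ r) ≤ B.orthogonal (K ∙ p) := fun x hx ↦
    mem_orthogonal_span_singleton.2 (h x (mem_orthogonal_span_singleton.1 hx))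
  have := LinearMap.BilinForm.orthogonal_le (B := B) hle
  simp only [LinearMap.BilinForm.orthogonal_orthogonal hB hrefl,
    Submodule.span_singleton_le_iff_mem] at this
  exact hpr this

lemma orthogonal_eq_self [FiniteDimensional K V] (hB : B.Nondegenerate)
    (hT : T ≤ B.orthogonal T) (hdim : finrank K V = 2 * finrank K T) : B.orthogonal T = T := by
  refine (Submodule.eq_of_le_of_finrank_eq hT ?_).symm
  rw [LinearMap.BilinForm.finrank_orthogonal hB]
  lia

end Bilinear

section Projection

variable {K V : Type*} [Field K] [AddCommGroup V] [Module K V]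
  {B : LinearMap.BilinForm K V} {S T : Submodule K V} {p v : V}

/-- The projection of the vector `v` onto `T` in the polar space of `B`: if `T` is a maximal totally
isotropic subspace not containing `v`, this is the maximal totally isotropic subspace through `v`
that meets `T` in the hyperplane `T ∩ v^⊥`. -/
def polarProj (B : LinearMap.BilinForm K V) (v : V) (T : Submodule K V) : Submodule K V :=
  T ⊓ LinearMap.ker (B v) ⊔ K ∙ v

lemma polarProj_le_orthogonal_self (hB : B.IsAlt) (hT : T ≤ B.orthogonal T) :
    polarProj B v T ≤ B.orthogonal (polarProj B v T) :=
  sup_span_le_orthogonal_self hB (le_orthogonal_self_of_le inf_le_left hT)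
    fun _ hw ↦ hB.isRefl _ _ hw.2

lemma finrank_polarProj [FiniteDimensional K V] (hT : T ≤ B.orthogonal T) (hp : p ∈ T)
    (hvp : B v p ≠ 0) : finrank K (polarProj B v T) = finrank K T := by
  have hv : v ∉ T ⊓ LinearMap.ker (B v) := fun hv ↦ hvp (hT hp v hv.1)
  rw [polarProj, Submodule.finrank_sup_span_singleton hv, finrank_inf_ker_add_one hp hvp]

lemma polarProj_inf_lt (hT : T ≤ B.orthogonal T) (hS : S ≤ B.orthogonal S)
    (hp : p ∈ T ⊓ S) (hvp : B v p ≠ 0) : polarProj B v T ⊓ S < T ⊓ S := by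
  have hle : polarProj B v T ⊓ S ≤ T ⊓ LinearMap.ker (B v) := by
    rintro x ⟨hx, hxS⟩
    obtain ⟨t, ht, w, hw, rfl⟩ := Submodule.mem_sup.1 hx
    obtain ⟨c, rfl⟩ := Submodule.mem_span_singleton.1 hw
    have hc : c = 0 := by simpa [hT hp.1 t ht.1, hvp] using hS hp.2 _ hxS
    rwa [hc, zero_smul, add_zero]
  refine lt_of_le_of_ne (le_inf (hle.trans inf_le_left) inf_le_right) fun heq ↦ ?_
  exact hvp (hle (heq ▸ hp)).2

lemma not_disjoint_polarProj [FiniteDimensional K V]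
    (h : 2 ≤ finrank K (T ⊓ S : Submodule K V)) : ¬ Disjoint (polarProj B v T) S := by
  intro hdisj
  have hbot : T ⊓ S ⊓ LinearMap.ker (B v) = ⊥ := by
    rw [eq_bot_iff, ← hdisj.eq_bot, inf_right_comm]
    exact inf_le_inf_right S le_sup_left
  have := finrank_le_finrank_inf_ker_add_one (T ⊓ S) (B v)
  rw [hbot, finrank_bot] at this
  lia

end Projection

section OppositePair

variable {K V : Type*} [Field K] [AddCommGroup V] [Module K V]
  {B : LinearMap.BilinForm K V} {S T : Submodule K V} {k m n : ℕ}

/-- Two totally isotropic `k`-spaces that are opposite in the polar space of `B`. -/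
structure IsOppositePair (B : LinearMap.BilinForm K V) (k : ℕ) (S T : Submodule K V) : Prop where
  left_le_orthogonal : S ≤ B.orthogonal S
  right_le_orthogonal : T ≤ B.orthogonal T
  finrank_left : finrank K S = k
  finrank_right : finrank K T = k
  disjoint : Disjoint (B.orthogonal S) T

namespace IsOppositePair

variable (B) in
lemma bot : IsOppositePair B 0 ⊥ ⊥ :=
  ⟨bot_le, bot_le, finrank_bot K V, finrank_bot K V, disjoint_bot_right⟩

lemma disjoint_symm [FiniteDimensional K V] (hB : B.Nondegenerate) (hrefl : B.IsRefl)
    (h : IsOppositePair B k S T) : Disjoint (B.orthogonal T) S :=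
  disjoint_orthogonal_symm hB hrefl (h.finrank_left.trans h.finrank_right.symm) h.disjoint

lemma disjoint_sup_orthogonal_sup [FiniteDimensional K V] (hB : B.Nondegenerate)
    (hrefl : B.IsRefl) (h : IsOppositePair B k S T) :
    Disjoint (S ⊔ T) (B.orthogonal (S ⊔ T)) := by
  rw [orthogonal_sup, Submodule.disjoint_def]
  rintro x hx ⟨hxS, hxT⟩
  obtain ⟨s, hs, t, ht, rfl⟩ := Submodule.mem_sup.1 hx
  have htS : t ∈ B.orthogonal S :=
    (Submodule.add_mem_iff_right _ (h.left_le_orthogonal hs)).1 hxS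
  obtain rfl : t = 0 := Submodule.disjoint_def.1 h.disjoint t htS ht
  rw [add_zero] at hxT ⊢
  exact Submodule.disjoint_def.1 (h.disjoint_symm hB hrefl) s hxT hs

lemma sup_span [FiniteDimensional K V] (hB : B.IsAlt) (h : IsOppositePair B k S T) {x y : V}
    (hx : x ∈ B.orthogonal (S ⊔ T)) (hy : y ∈ B.orthogonal (S ⊔ T)) (hyx : B y x ≠ 0) :
    IsOppositePair B (k + 1) (S ⊔ K ∙ y) (T ⊔ K ∙ x) := by
  rw [orthogonal_sup] at hx hy
  have hyS : y ∉ S := fun h' ↦ hyx (hx.1 y h')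
  have hxT : x ∉ T := fun h' ↦ hyx (hB.isRefl _ _ (hy.2 x h'))
  refine ⟨sup_span_le_orthogonal_self hB h.left_le_orthogonal hy.1,
    sup_span_le_orthogonal_self hB h.right_le_orthogonal hx.2, ?_, ?_, ?_⟩
  · rw [Submodule.finrank_sup_span_singleton hyS, h.finrank_left]
  · rw [Submodule.finrank_sup_span_singleton hxT, h.finrank_right]
  rw [orthogonal_sup, Submodule.disjoint_def]
  rintro z ⟨hzS, hzy⟩ hz
  obtain ⟨t, ht, w, hw, rfl⟩ := Submodule.mem_sup.1 hz
  obtain ⟨c, rfl⟩ := Submodule.mem_span_singleton.1 hw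
  have hc : c = 0 := by
    simpa [hB.isRefl _ _ (hy.2 t ht), hyx] using mem_orthogonal_span_singleton.1 hzy
  subst hc
  rw [zero_smul, add_zero] at hzS ⊢
  exact Submodule.disjoint_def.1 h.disjoint t hzS ht

lemma exists_sup_span [FiniteDimensional K V] (hB : B.Nondegenerate) (halt : B.IsAlt)
    (h : IsOppositePair B k S T) {x : V} (hx : x ∈ B.orthogonal (S ⊔ T)) (hx0 : x ≠ 0) :
    ∃ y, IsOppositePair B (k + 1) (S ⊔ K ∙ y) (T ⊔ K ∙ x) := by
  obtain ⟨y, hy, hyx⟩ := exists_mem_orthogonal_apply_ne_zero hB halt.isRefl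
    (h.disjoint_sup_orthogonal_sup hB halt.isRefl) hx hx0
  exact ⟨y, h.sup_span halt hx hy hyx⟩

lemma exists_succ [FiniteDimensional K V] (hB : B.Nondegenerate) (halt : B.IsAlt)
    (h : IsOppositePair B k S T) (hk : 2 * k < finrank K V) :
    ∃ S' T', IsOppositePair B (k + 1) S' T' ∧ S ≤ S' ∧ T ≤ T' := by
  have hne : B.orthogonal (S ⊔ T) ≠ ⊥ := by
    apply Submodule.one_le_finrank_iff.1
    have := Submodule.finrank_add_le_finrank_add_finrank S T
    rw [h.finrank_left, h.finrank_right] at this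
    rw [LinearMap.BilinForm.finrank_orthogonal hB]
    lia
  obtain ⟨x, hx, hx0⟩ := Submodule.exists_mem_ne_zero_of_ne_bot hne
  obtain ⟨y, hy⟩ := h.exists_sup_span hB halt hx hx0
  exact ⟨_, _, hy, le_sup_left, le_sup_left⟩

/- For `x ∈ S` and `y ∈ T` with `B x y ≠ 0`, the hyperplanes `S ∩ y^⊥` of `S` and `T ∩ x^⊥` of `T`
are opposite. -/
lemma exists_pred [FiniteDimensional K V] (h : IsOppositePair B (k + 1) S T) :
    ∃ S' T', IsOppositePair B k S' T' ∧ S' ≤ S ∧ T' ≤ T := by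
  have hT : T ≠ ⊥ := by
    rw [← Submodule.one_le_finrank_iff, h.finrank_right]
    exact Nat.le_add_left 1 k
  obtain ⟨y, hy, hy0⟩ := Submodule.exists_mem_ne_zero_of_ne_bot hT
  obtain ⟨x, hx, hxy⟩ : ∃ x ∈ S, B x y ≠ 0 := by
    by_contra! hS
    exact hy0 (Submodule.disjoint_def.1 h.disjoint y hS hy)
  refine ⟨S ⊓ LinearMap.ker (B.flip y), T ⊓ LinearMap.ker (B x),
    ⟨le_orthogonal_self_of_le inf_le_left h.left_le_orthogonal,
      le_orthogonal_self_of_le inf_le_left h.right_le_orthogonal, ?_, ?_, ?_⟩,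
    inf_le_left, inf_le_left⟩
  · have := finrank_inf_ker_add_one (f := B.flip y) hx hxy
    rw [h.finrank_left] at this
    exact Nat.add_right_cancel this
  · have := finrank_inf_ker_add_one hy hxy
    rw [h.finrank_right] at this
    exact Nat.add_right_cancel this
  rw [Submodule.disjoint_def]
  rintro z hzS ⟨hzT, hzx⟩
  refine Submodule.disjoint_def.1 h.disjoint z ?_ hzT
  rw [← inf_ker_sup_span_singleton (f := B.flip y) hx hxy, orthogonal_sup]
  exact ⟨hzS, mem_orthogonal_span_singleton.2 hzx⟩

end IsOppositePair

lemma exists_isOppositePair_two [FiniteDimensional K V] (hB : B.Nondegenerate) (halt : B.IsAlt)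
    {p r : V} (hr : r ≠ 0) (hpr : B p r = 0) (hp : p ∉ K ∙ r) :
    ∃ S T, IsOppositePair B 2 S T ∧ p ∈ S ∧ r ∈ T := by
  obtain ⟨x, hrx, hpx⟩ := exists_apply_eq_zero_and_apply_ne_zero hB halt.isRefl hp
  have hpair : IsOppositePair B 1 (⊥ ⊔ K ∙ p) (⊥ ⊔ K ∙ x) :=
    (IsOppositePair.bot B).sup_span halt (by simp) (by simp) hpx
  simp only [bot_sup_eq] at hpair
  have hr_orth : r ∈ B.orthogonal (K ∙ p ⊔ K ∙ x) := by
    rw [orthogonal_sup]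
    exact ⟨mem_orthogonal_span_singleton.2 hpr,
      mem_orthogonal_span_singleton.2 (halt.isRefl _ _ hrx)⟩
  obtain ⟨y, hy⟩ := hpair.exists_sup_span hB halt hr_orth hr
  exact ⟨_, _, hy, Submodule.mem_sup_left (Submodule.mem_span_singleton_self p),
    Submodule.mem_sup_right (Submodule.mem_span_singleton_self r)⟩

lemma exists_isOppositePair_le_of_finrank_inf_eq_one [FiniteDimensional K V]
    (hB : B.Nondegenerate) (hS : S ≤ B.orthogonal S) (hT : T ≤ B.orthogonal T)
    (hSn : finrank K S = n + 1) (hTn : finrank K T = n + 1) (hdim : finrank K V = 2 * (n + 1))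
    (hST : finrank K (S ⊓ T : Submodule K V) = 1) :
    ∃ S' T', IsOppositePair B n S' T' ∧ S' ≤ S ∧ T' ≤ T := by
  obtain ⟨p, hp0, hspan⟩ := exists_eq_span_singleton_of_finrank_eq_one hST
  have hp : p ∈ S ⊓ T := hspan ▸ Submodule.mem_span_singleton_self p
  obtain ⟨v, hvp⟩ : ∃ v, B v p ≠ 0 := not_forall.1 (mt (hB.2 p) hp0)
  refine ⟨S ⊓ LinearMap.ker (B v), T ⊓ LinearMap.ker (B v),
    ⟨le_orthogonal_self_of_le inf_le_left hS, le_orthogonal_self_of_le inf_le_left hT, ?_, ?_, ?_⟩,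
    inf_le_left, inf_le_left⟩
  · exact Nat.add_right_cancel ((finrank_inf_ker_add_one hp.1 hvp).trans hSn)
  · exact Nat.add_right_cancel ((finrank_inf_ker_add_one hp.2 hvp).trans hTn)
  rw [Submodule.disjoint_def]
  rintro z hz ⟨hzT, hvz⟩
  have hzS : z ∈ S := by
    rw [← orthogonal_eq_self hB hS (hSn ▸ hdim), ← inf_ker_sup_span_singleton hp.1 hvp,
      orthogonal_sup]
    exact ⟨hz, mem_orthogonal_span_singleton.2 (hT hzT p hp.2)⟩
  have hzp : z ∈ K ∙ p := hspan ▸ Submodule.mem_inf.2 ⟨hzS, hzT⟩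
  obtain ⟨c, rfl⟩ := Submodule.mem_span_singleton.1 hzp
  have hc : c = 0 := by simpa [hvp] using hvz
  rw [hc, zero_smul]

/-- Two increasing sequences of subspaces whose members of index `j ≤ m` are opposite totally
isotropic `j`-spaces: a pair of opposite flags of type `{0, …, m}`. The members of index greater
than `m` carry no information, except that they keep the sequences increasing. -/
structure IsOppositeChain (B : LinearMap.BilinForm K V) (m : ℕ) (f g : ℕ → Submodule K V) :
    Prop where
  monotone_left : Monotone f
  monotone_right : Monotone g
  isOppositePair : ∀ j ≤ m, IsOppositePair B j (f j) (g j)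

lemma monotone_ite_le {α : Type*} [Preorder α] {f : ℕ → α} (hf : Monotone f) {a : α}
    (ha : f m ≤ a) : Monotone fun j ↦ if j ≤ m then f j else a := by
  intro j k hjk
  dsimp only
  split_ifs with hj hk hk
  · exact hf hjk
  · exact (hf hj).trans ha
  · exact absurd (hjk.trans hk) hj
  · exact le_rfl

lemma IsOppositeChain.succ {f g : ℕ → Submodule K V} (h : IsOppositeChain B m f g)
    (hST : IsOppositePair B (m + 1) S T) (hS : f m ≤ S) (hT : g m ≤ T) :
    IsOppositeChain B (m + 1) (fun j ↦ if j ≤ m then f j else S)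
      (fun j ↦ if j ≤ m then g j else T) where
  monotone_left := monotone_ite_le h.monotone_left hS
  monotone_right := monotone_ite_le h.monotone_right hT
  isOppositePair j hj := by
    split_ifs with hjm
    · exact h.isOppositePair j hjm
    · obtain rfl : j = m + 1 := by lia
      exact hST

lemma IsOppositePair.exists_chain_of_eq [FiniteDimensional K V] (h : IsOppositePair B m S T) :
    ∃ f g, IsOppositeChain B m f g ∧ f m = S ∧ g m = T := by
  induction m generalizing S T with
  | zero =>
    refine ⟨fun _ ↦ S, fun _ ↦ T, ⟨monotone_const, monotone_const, fun j hj ↦ ?_⟩, rfl, rfl⟩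
    rwa [Nat.le_zero.1 hj]
  | succ m ih =>
    obtain ⟨S', T', hST', hS, hT⟩ := h.exists_pred
    obtain ⟨f, g, hfg, rfl, rfl⟩ := ih hST'
    exact ⟨_, _, hfg.succ h hS hT, by simp, by simp⟩

lemma IsOppositePair.exists_chain [FiniteDimensional K V] (hB : B.Nondegenerate) (halt : B.IsAlt)
    (h : IsOppositePair B m S T) (hmn : m ≤ n) (hn : 2 * n ≤ finrank K V) :
    ∃ f g, IsOppositeChain B n f g ∧ f m = S ∧ g m = T := by
  induction n, hmn using Nat.le_induction with
  | base => exact h.exists_chain_of_eq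
  | succ n hmn ih =>
    obtain ⟨f, g, hfg, hf, hg⟩ := ih (by lia)
    obtain ⟨S', T', hST', hS, hT⟩ :=
      (hfg.isOppositePair n le_rfl).exists_succ hB halt (by lia)
    exact ⟨_, _, hfg.succ hST' hS hT, by simpa [hmn] using hf, by simpa [hmn] using hg⟩

lemma exists_le_orthogonal_self_finrank_eq [FiniteDimensional K V] (hB : B.Nondegenerate)
    (halt : B.IsAlt) (hn : 2 * n ≤ finrank K V) :
    ∃ S : Submodule K V, S ≤ B.orthogonal S ∧ finrank K S = n := by
  obtain ⟨f, g, hfg, -, -⟩ := (IsOppositePair.bot B).exists_chain hB halt n.zero_le hn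
  have hpair := hfg.isOppositePair n le_rfl
  exact ⟨f n, hpair.left_le_orthogonal, hpair.finrank_left⟩

end OppositePair

section PolarSpace

variable {F V : Type} [Field F] [AddCommGroup V] [Module F V] {B : V →ₗ[F] V →ₗ[F] F}
  {S T W : Submodule F V}

lemma bperp_eq_orthogonal (B : V →ₗ[F] V →ₗ[F] F) (W : Submodule F V) :
    bperp B W = LinearMap.BilinForm.orthogonal B W := by
  ext v
  simp [bperp, Submodule.mem_iInf]

lemma isTotIso_iff_le_orthogonal : IsTotIso B W ↔ W ≤ LinearMap.BilinForm.orthogonal B W :=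
  ⟨fun h w hw u hu ↦ h u hu w hw, fun h u hu _ hw ↦ h hw u hu⟩

lemma spaceOpp_iff_disjoint :
    SpaceOpp B S T ↔ Disjoint (LinearMap.BilinForm.orthogonal B S) T := by
  rw [SpaceOpp, bperp_eq_orthogonal, disjoint_iff]

lemma NondegForm.nondegenerate (hnd : NondegForm B) (halt : B.IsAlt) : B.Nondegenerate :=
  halt.isRefl.nondegenerate_iff_separatingLeft.2 hnd

lemma SpaceOpp.symm [FiniteDimensional F V] (hB : B.Nondegenerate) (hrefl : B.IsRefl)
    (hST : finrank F S = finrank F T) (h : SpaceOpp B S T) : SpaceOpp B T S :=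
  spaceOpp_iff_disjoint.2 (disjoint_orthogonal_symm hB hrefl hST (spaceOpp_iff_disjoint.1 h))

lemma IsTotIso.not_spaceOpp_self (hW : IsTotIso B W) (hW0 : W ≠ ⊥) : ¬ SpaceOpp B W W := by
  rw [spaceOpp_iff_disjoint]
  exact fun h ↦ hW0 (h.eq_bot_of_ge (isTotIso_iff_le_orthogonal.1 hW))

lemma spaceOpp_span_singleton_iff {r : V} (hr : r ≠ 0) (p : V) :
    SpaceOpp B (F ∙ p) (F ∙ r) ↔ B p r ≠ 0 := by
  rw [spaceOpp_iff_disjoint, Submodule.disjoint_span_singleton' hr, Ne,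
    ← mem_orthogonal_span_singleton]

end PolarSpace

section MaximalEKR

variable {F V : Type} [Field F] [AddCommGroup V] [Module F V] [FiniteDimensional F V]
  {B : V →ₗ[F] V →ₗ[F] F} {s n : ℕ} {𝓕 : Set (Submodule F V)} {S : Submodule F V}

lemma IsEKRSpaces.insert (hB : B.Nondegenerate) (hrefl : B.IsRefl) (h𝓕 : IsEKRSpaces B s 𝓕)
    (hs : s ≠ 0) (hS : IsTotIso B S) (hSs : finrank F S = s) (hopp : ∀ T ∈ 𝓕, ¬ SpaceOpp B S T) :
    IsEKRSpaces B s (insert S 𝓕) := by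
  have hS0 : S ≠ ⊥ := by
    rintro rfl
    exact hs (hSs.symm.trans (finrank_bot F V))
  refine ⟨Set.forall_mem_insert.2 ⟨⟨hS, hSs⟩, h𝓕.1⟩, ?_⟩
  rintro T (rfl | hT) U (rfl | hU)
  · exact hS.not_spaceOpp_self hS0
  · exact hopp U hU
  · exact fun h ↦ hopp T hT (h.symm hB hrefl ((h𝓕.1 T hT).2.trans hSs.symm))
  · exact h𝓕.2 T hT U hU

lemma mem_of_maximal_isEKRSpaces (hB : B.Nondegenerate) (hrefl : B.IsRefl)
    (h𝓕 : Maximal (IsEKRSpaces B s) 𝓕) (hs : s ≠ 0) (hS : IsTotIso B S) (hSs : finrank F S = s)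
    (hopp : ∀ T ∈ 𝓕, ¬ SpaceOpp B S T) : S ∈ 𝓕 :=
  h𝓕.mem_of_prop_insert (h𝓕.prop.insert hB hrefl hs hS hSs hopp)

lemma nonempty_of_maximal_isEKRSpaces (hB : B.Nondegenerate) (halt : B.IsAlt)
    (h𝓕 : Maximal (IsEKRSpaces B s) 𝓕) (hs : s ≠ 0) (hsV : 2 * s ≤ finrank F V) :
    𝓕.Nonempty := by
  obtain ⟨S, hS, hSs⟩ := exists_le_orthogonal_self_finrank_eq hB halt hsV
  by_contra hempty
  rw [Set.not_nonempty_iff_eq_empty] at hempty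
  have hmem : S ∈ 𝓕 := mem_of_maximal_isEKRSpaces hB halt.isRefl h𝓕 hs
    (isTotIso_iff_le_orthogonal.2 hS) hSs (by simp [hempty])
  simp [hempty] at hmem

lemma exists_distinct_of_maximal_isEKRSpaces_one (hB : B.Nondegenerate) (halt : B.IsAlt)
    (h𝓕 : Maximal (IsEKRSpaces B 1) 𝓕) (hV : 2 < finrank F V) :
    ∃ P ∈ 𝓕, ∃ R ∈ 𝓕, P ≠ R := by
  obtain ⟨P, hP⟩ := nonempty_of_maximal_isEKRSpaces hB halt h𝓕 one_ne_zero hV.le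
  obtain ⟨p, hp0, rfl⟩ := exists_eq_span_singleton_of_finrank_eq_one (h𝓕.prop.1 P hP).2
  refine ⟨F ∙ p, hP, ?_⟩
  by_contra! hall
  obtain ⟨r, hr, hrp⟩ : ∃ r ∈ LinearMap.BilinForm.orthogonal B (F ∙ p), r ∉ F ∙ p := by
    refine SetLike.not_le_iff_exists.1 fun hle ↦ ?_
    have := Submodule.finrank_mono hle
    rw [LinearMap.BilinForm.finrank_orthogonal hB, finrank_span_singleton hp0] at this
    lia
  have hr0 : r ≠ 0 := fun h ↦ hrp (h ▸ zero_mem _)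
  have hR : F ∙ r ∈ 𝓕 := by
    refine mem_of_maximal_isEKRSpaces hB halt.isRefl h𝓕 one_ne_zero
      (isTotIso_iff_le_orthogonal.2 (span_singleton_le_orthogonal_self halt r))
      (finrank_span_singleton hr0) fun Q hQ ↦ ?_
    rw [← hall Q hQ, spaceOpp_span_singleton_iff hp0, not_not]
    exact halt.isRefl _ _ (mem_orthogonal_span_singleton.1 hr)
  exact hrp (hall _ hR ▸ Submodule.mem_span_singleton_self r)

lemma exists_finrank_inf_eq_one_of_maximal_isEKRSpaces (hB : B.Nondegenerate) (halt : B.IsAlt)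
    (h𝓕 : Maximal (IsEKRSpaces B n) 𝓕) (hn : n ≠ 0) (hdim : finrank F V = 2 * n) :
    ∃ S ∈ 𝓕, ∃ T ∈ 𝓕, finrank F (S ⊓ T : Submodule F V) = 1 := by
  have hopp : ∀ S T : Submodule F V, IsTotIso B S → finrank F S = n →
      (SpaceOpp B S T ↔ Disjoint S T) := by
    rintro S T hS rfl
    rw [spaceOpp_iff_disjoint, orthogonal_eq_self hB (isTotIso_iff_le_orthogonal.1 hS) hdim]
  by_contra! hne_one
  have htwo : ∀ S ∈ 𝓕, ∀ T ∈ 𝓕, 2 ≤ finrank F (S ⊓ T : Submodule F V) := by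
    intro S hS T hT
    have hne_zero : finrank F (S ⊓ T : Submodule F V) ≠ 0 := by
      rw [Ne, Submodule.finrank_eq_zero, ← disjoint_iff,
        ← hopp S T (h𝓕.prop.1 S hS).1 (h𝓕.prop.1 S hS).2]
      exact h𝓕.prop.2 S hS T hT
    have := hne_one S hS T hT
    lia
  obtain ⟨S, hS⟩ := nonempty_of_maximal_isEKRSpaces hB halt h𝓕 hn hdim.ge
  obtain ⟨T, hT, hTmin⟩ := exists_minimalFor_of_wellFoundedLT (· ∈ 𝓕)
    (fun T ↦ finrank F (T ⊓ S : Submodule F V)) ⟨S, hS⟩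
  obtain ⟨p, hp, hp0⟩ : ∃ p ∈ T ⊓ S, p ≠ 0 :=
    Submodule.exists_mem_ne_zero_of_ne_bot
      (Submodule.one_le_finrank_iff.1 (one_le_two.trans (htwo T hT S hS)))
  obtain ⟨v, hvp⟩ : ∃ v, B v p ≠ 0 := not_forall.1 (mt (hB.2 p) hp0)
  have hTiso := isTotIso_iff_le_orthogonal.1 (h𝓕.prop.1 T hT).1
  have hproj : IsTotIso B (polarProj B v T) :=
    isTotIso_iff_le_orthogonal.2 (polarProj_le_orthogonal_self halt hTiso)
  have hproj_rank : finrank F (polarProj B v T) = n :=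
    (finrank_polarProj hTiso hp.1 hvp).trans (h𝓕.prop.1 T hT).2
  have hproj_mem : polarProj B v T ∈ 𝓕 := by
    refine mem_of_maximal_isEKRSpaces hB halt.isRefl h𝓕 hn hproj hproj_rank fun R hR ↦ ?_
    rw [hopp _ R hproj hproj_rank]
    exact not_disjoint_polarProj (htwo T hT R hR)
  have hlt := Submodule.finrank_lt_finrank_of_lt (polarProj_inf_lt hTiso
    (isTotIso_iff_le_orthogonal.1 (h𝓕.prop.1 S hS).1) hp hvp)
  exact hlt.not_ge (hTmin hproj_mem hlt.le)

lemma maximal_of_forall_ncard_le {α : Type*} [Finite α] {P : Set α → Prop} {s : Set α}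
    (hs : P s) (hmax : ∀ t, P t → t.ncard ≤ s.ncard) : Maximal P s :=
  ⟨hs, fun t ht hst ↦ (Set.eq_of_subset_of_ncard_le hst (hmax t ht)).ge⟩

end MaximalEKR

section Flags

variable {F V : Type} [Field F] [AddCommGroup V] [Module F V] {B : V →ₗ[F] V →ₗ[F] F}
  {i n : ℕ} {J : Finset ℕ} {f g : ℕ → Submodule F V} {I I₁ I₂ S T : Submodule F V}

lemma exists_flag_insert (hf : Monotone f) (hfiso : ∀ j ∈ J, IsTotIso B (f j))
    (hfrank : ∀ j ∈ J, finrank F (f j) = j) (hiJ : i ∉ J) (hI : IsTotIso B I)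
    (hIi : finrank F I = i) (hle : ∀ j ∈ J, j < i → f j ≤ I) (hge : ∀ j ∈ J, i < j → I ≤ f j) :
    ∃ C : SFlag B (insert i J), C.space i = I ∧ ∀ j ∈ J, C.space j = f j := by
  have hne : ∀ j ∈ J, j ≠ i := fun j hj h ↦ hiJ (h ▸ hj)
  let U : ℕ → Submodule F V := fun j ↦ if j = i then I else if j ∈ J then f j else ⊥
  have hUi : U i = I := if_pos rfl
  have hUJ : ∀ j ∈ J, U j = f j := fun j hj ↦ by simp only [U, hne j hj, hj, if_true, if_false]
  refine ⟨⟨U, ?_, ?_, ?_, ?_⟩, hUi, hUJ⟩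
  · rw [Finset.forall_mem_insert, hUi]
    exact ⟨hI, fun j hj ↦ hUJ j hj ▸ hfiso j hj⟩
  · rw [Finset.forall_mem_insert, hUi]
    exact ⟨hIi, fun j hj ↦ (hUJ j hj).symm ▸ hfrank j hj⟩
  · intro j hj k hk hjk
    rcases Finset.mem_insert.1 hj with rfl | hjJ <;> rcases Finset.mem_insert.1 hk with rfl | hkJ
    · exact le_rfl
    · rw [hUi, hUJ k hkJ]
      exact hge k hkJ (lt_of_le_of_ne hjk (hne k hkJ).symm)
    · rw [hUi, hUJ j hjJ]
      exact hle j hjJ (lt_of_le_of_ne hjk (hne j hjJ))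
    · rw [hUJ j hjJ, hUJ k hkJ]
      exact hf hjk
  · intro j hj
    rw [Finset.mem_insert, not_or] at hj
    simp only [U, hj.1, hj.2, if_false]

/-- The subspaces `I₁` and `I₂` extend to flags of type `{i} ∪ J`, with `I₁` and `I₂` as members of
dimension `i`, whose subflags of type `J` are opposite. -/
def ExtendToOpposite (B : V →ₗ[F] V →ₗ[F] F) (i : ℕ) (J : Finset ℕ) (I₁ I₂ : Submodule F V) :
    Prop :=
  ∃ F₁ F₂ : SFlag B (insert i J), F₁.space i = I₁ ∧ F₂.space i = I₂ ∧
    ∀ j ∈ J, bperp B (F₁.space j) ⊓ F₂.space j = ⊥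

lemma IsOppositeChain.extendToOpposite (h : IsOppositeChain B n f g) (hJ : ∀ j ∈ J, j ≤ n)
    (hiJ : i ∉ J) (hI₁ : IsTotIso B I₁ ∧ finrank F I₁ = i)
    (hI₂ : IsTotIso B I₂ ∧ finrank F I₂ = i)
    (hle : ∀ j ∈ J, j < i → f j ≤ I₁ ∧ g j ≤ I₂) (hge : ∀ j ∈ J, i < j → I₁ ≤ f j ∧ I₂ ≤ g j) :
    ExtendToOpposite B i J I₁ I₂ := by
  have hpair : ∀ j ∈ J, IsOppositePair B j (f j) (g j) := fun j hj ↦ h.isOppositePair j (hJ j hj)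
  obtain ⟨F₁, hF₁i, hF₁⟩ := exists_flag_insert h.monotone_left
    (fun j hj ↦ isTotIso_iff_le_orthogonal.2 (hpair j hj).left_le_orthogonal)
    (fun j hj ↦ (hpair j hj).finrank_left) hiJ hI₁.1 hI₁.2
    (fun j hj hji ↦ (hle j hj hji).1) (fun j hj hij ↦ (hge j hj hij).1)
  obtain ⟨F₂, hF₂i, hF₂⟩ := exists_flag_insert h.monotone_right
    (fun j hj ↦ isTotIso_iff_le_orthogonal.2 (hpair j hj).right_le_orthogonal)
    (fun j hj ↦ (hpair j hj).finrank_right) hiJ hI₂.1 hI₂.2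
    (fun j hj hji ↦ (hle j hj hji).2) (fun j hj hij ↦ (hge j hj hij).2)
  refine ⟨F₁, F₂, hF₁i, hF₂i, fun j hj ↦ ?_⟩
  rw [hF₁ j hj, hF₂ j hj, bperp_eq_orthogonal]
  exact (hpair j hj).disjoint.eq_bot

variable [FiniteDimensional F V]

lemma extendToOpposite_one (hB : B.Nondegenerate) (halt : B.IsAlt)
    (hS : IsTotIso B S ∧ finrank F S = 1) (hT : IsTotIso B T ∧ finrank F T = 1) (hST : S ≠ T)
    (hopp : ¬ SpaceOpp B S T) (hn : 2 ≤ n) (hV : 2 * n ≤ finrank F V)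
    (hJ : J ⊆ Finset.Icc 1 n) (h1J : 1 ∉ J) : ExtendToOpposite B 1 J S T := by
  obtain ⟨p, -, rfl⟩ := exists_eq_span_singleton_of_finrank_eq_one hS.2
  obtain ⟨r, hr, rfl⟩ := exists_eq_span_singleton_of_finrank_eq_one hT.2
  have hpr : B p r = 0 := not_not.1 (mt (spaceOpp_span_singleton_iff hr p).2 hopp)
  have hp : p ∉ F ∙ r := fun h ↦ hST <| Submodule.eq_of_le_of_finrank_eq
    ((Submodule.span_singleton_le_iff_mem _ _).2 h) (hS.2.trans hT.2.symm)
  obtain ⟨P, R, hPR, hpP, hrR⟩ := exists_isOppositePair_two hB halt hr hpr hp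
  obtain ⟨f, g, hfg, rfl, rfl⟩ := hPR.exists_chain hB halt hn hV
  refine hfg.extendToOpposite (fun j hj ↦ (Finset.mem_Icc.1 (hJ hj)).2) h1J hS hT
    (fun j hj hj1 ↦ absurd (Finset.mem_Icc.1 (hJ hj)).1 hj1.not_ge) fun j _ hj ↦ ?_
  rw [Submodule.span_singleton_le_iff_mem, Submodule.span_singleton_le_iff_mem]
  exact ⟨hfg.monotone_left hj hpP, hfg.monotone_right hj hrR⟩

lemma extendToOpposite_of_finrank_inf_eq_one (hB : B.Nondegenerate)
    (hS : IsTotIso B S ∧ finrank F S = n + 1) (hT : IsTotIso B T ∧ finrank F T = n + 1)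
    (hdim : finrank F V = 2 * (n + 1)) (hST : finrank F (S ⊓ T : Submodule F V) = 1)
    (hJ : ∀ j ∈ J, j ≤ n) : ExtendToOpposite B (n + 1) J S T := by
  obtain ⟨S', T', hST', hS', hT'⟩ := exists_isOppositePair_le_of_finrank_inf_eq_one hB
    (isTotIso_iff_le_orthogonal.1 hS.1) (isTotIso_iff_le_orthogonal.1 hT.1) hS.2 hT.2 hdim hST
  obtain ⟨f, g, hfg, rfl, rfl⟩ := hST'.exists_chain_of_eq
  exact hfg.extendToOpposite hJ (fun h ↦ (hJ _ h).not_gt n.lt_succ_self) hS hT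
    (fun j hj _ ↦ ⟨(hfg.monotone_left (hJ j hj)).trans hS',
      (hfg.monotone_right (hJ j hj)).trans hT'⟩)
    fun j hj hnj ↦ absurd hnj (Nat.lt_succ_of_le (hJ j hj)).not_gt

end Flags

theorem stmt_8_general {F V : Type} [Field F] [AddCommGroup V] [Module F V]
    [FiniteDimensional F V] {n : ℕ} {B : V →ₗ[F] V →ₗ[F] F} (halt : IsAltForm B)
    (hnd : NondegForm B) (hdim : finrank F V = 2 * n) {i : ℕ} (hi : i = 1 ∨ i = n)
    {𝓕 : Set (Submodule F V)} (h𝓕 : Maximal (IsEKRSpaces B i) 𝓕) {J : Finset ℕ}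
    (hJ : J ⊆ Finset.Icc 1 n) (hJne : J.Nonempty) (hiJ : i ∉ J) :
    ∃ I₁ ∈ 𝓕, ∃ I₂ ∈ 𝓕, ExtendToOpposite B i J I₁ I₂ := by
  have hB := hnd.nondegenerate halt
  have hmem : ∀ j ∈ J, 1 ≤ j ∧ j ≤ n ∧ j ≠ i := fun j hj ↦
    ⟨(Finset.mem_Icc.1 (hJ hj)).1, (Finset.mem_Icc.1 (hJ hj)).2, fun h ↦ hiJ (h ▸ hj)⟩
  obtain ⟨j, hj⟩ := hJne
  have hn : 2 ≤ n := by
    have := hmem j hj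
    lia
  rcases hi with rfl | rfl
  · obtain ⟨S, hS, T, hT, hST⟩ :=
      exists_distinct_of_maximal_isEKRSpaces_one hB halt h𝓕 (by lia)
    exact ⟨S, hS, T, hT, extendToOpposite_one hB halt (h𝓕.prop.1 S hS) (h𝓕.prop.1 T hT) hST
      (h𝓕.prop.2 S hS T hT) hn hdim.ge hJ hiJ⟩
  · obtain ⟨m, rfl⟩ := Nat.exists_eq_succ_of_ne_zero (by lia : i ≠ 0)
    obtain ⟨S, hS, T, hT, hST⟩ :=
      exists_finrank_inf_eq_one_of_maximal_isEKRSpaces hB halt h𝓕 m.succ_ne_zero hdim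
    refine ⟨S, hS, T, hT, extendToOpposite_of_finrank_inf_eq_one hB (h𝓕.prop.1 S hS)
      (h𝓕.prop.1 T hT) hdim hST fun j hj ↦ ?_⟩
    have := hmem j hj
    lia

/-- a maximum EKR-set of `i`-spaces (`i ∈ {1,n}`) contains two members
that extend to flags of type `{i} ∪ J` whose subflags of type `J` are opposite. -/
theorem stmt_8 {F V : Type} [Field F] [Fintype F] [AddCommGroup V] [Module F V]
    [FiniteDimensional F V] (n q : ℕ) (hn : 3 ≤ n) (hq : Fintype.card F = q)
    (B : V →ₗ[F] V →ₗ[F] F) (halt : IsAltForm B) (hnd : NondegForm B)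
    (hdim : Module.finrank F V = 2 * n)
    (i : ℕ) (hi : i = 1 ∨ i = n)
    (𝓕i : Set (Submodule F V)) (hEKR : IsEKRSpaces B i 𝓕i)
    (hmax : ∀ 𝓖 : Set (Submodule F V), IsEKRSpaces B i 𝓖 → 𝓖.ncard ≤ 𝓕i.ncard)
    (J : Finset ℕ) (hJ : J ⊆ Finset.Icc 1 n) (hJne : J.Nonempty) (hiJ : i ∉ J) :
    ∃ I₁ ∈ 𝓕i, ∃ I₂ ∈ 𝓕i, ∃ F₁ F₂ : SFlag B (insert i J),
      SFlag.space F₁ i = I₁ ∧ SFlag.space F₂ i = I₂ ∧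
      ∀ j ∈ J, bperp B (SFlag.space F₁ j) ⊓ SFlag.space F₂ j = ⊥ := by
  have : Finite V := Module.finite_of_finite F
  exact stmt_8_general halt hnd hdim hi (maximal_of_forall_ncard_le hEKR hmax) hJ hJne hiJ
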